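/- Let N = 5, α = π/5, a > b > 0, c = √(a² − b²), and t ∈ ℝ. Put u_k = (a·cos(2πk/5 + t), b·sin(2πk/5 + t)) for k = 0, …, 4 (indices mod 5). For each k let p_k be the pole of the line through u_k and u_{k+1} with respect to the unit circle centered at f_1 = (−c·cos α, 0), and p′_k the pole of the same line with respect to the unit circle centered at f_2 = (c·cos α, 0). Let A_1 be the area of the pentagon p_0 p_1 p_2 p_3 p_4 and A_2 the area of the pentagon p′_0 p′_1 p′_2 p′_3 p′_4, each given by half the absolute value of the shoelace sum Σ_k (x_k·y_{k+1} − x_{k+1}·y_k). Then 1/A_1 + 1/A_2 = (b/(40·sin(2π/5)·a))·((a⁴ + 10a²b² + 5b⁴)·(√5·(a² + 3b²) + 5a² + 7b²))/(5a⁴ + 10a²b² + b⁴); in particular this quantity does not depend on t. -/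

import Mathlib

open Real Finset

/-!
Write `θ k` for the parameter of the midpoint of the arc cut off by the `k`-th side, `β = π / n`
for half the angular step, and put the center of polarity at `(w * cos β, 0)`, where `w = ±c`. The
`k`-th pole is an explicit function of `θ k` with denominator `d k = a - w * cos (θ k)`. Up to a
telescoping term, the `k`-th term of the shoelace sum is a constant multiple of
`1 / d k + 1 / d (k + 1)`, and `b / d k` is a value of the Poisson kernel of the unit disc. The mean
of the Poisson kernel `P (r, ·)` over the vertices of a regular `n`-gon through `θ` is
`P (r ^ n, n * θ)`, so the reciprocal of the area is a constant plus a multiple of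
`r ^ n * cos (n * t)`, where `r = w / (a + b)`. For odd `n` the two centers of polarity, having
opposite `w`, make the second term cancel.
-/

section PoissonKernel

theorem sum_one_div_one_sub_pow_mul {K : Type*} [Field K] {n : ℕ} {ζ x : K}
    (hζ : IsPrimitiveRoot ζ n) (hx : x ^ n ≠ 1) :
    ∑ k ∈ range n, 1 / (1 - ζ ^ k * x) = n / (1 - x ^ n) := by
  have hn : n ≠ 0 := by rintro rfl; simp at hx
  have hx' : 1 - x ^ n ≠ 0 := sub_ne_zero.mpr hx.symm
  have pow_eq (k : ℕ) : (ζ ^ k * x) ^ n = x ^ n := by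
    rw [mul_pow, pow_right_comm, hζ.pow_eq_one, one_pow, one_mul]
  have geom (k : ℕ) :
      1 / (1 - ζ ^ k * x) = (∑ j ∈ range n, (ζ ^ j) ^ k * x ^ j) / (1 - x ^ n) := by
    have hk : 1 - ζ ^ k * x ≠ 0 := fun h ↦ hx' <| by
      rw [← pow_eq k, ← sub_eq_zero.mp h, one_pow, sub_self]
    rw [div_eq_div_iff hk hx', ← pow_eq k, one_mul, ← geom_sum_mul_neg]
    simp only [mul_pow, pow_right_comm]
  have sum_pow {j : ℕ} (hj : j ∈ range n) (hj0 : j ≠ 0) : ∑ k ∈ range n, (ζ ^ j) ^ k = 0 := by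
    have hζj : ζ ^ j - 1 ≠ 0 :=
      sub_ne_zero.mpr (hζ.pow_ne_one_of_pos_of_lt hj0 (mem_range.mp hj))
    refine (mul_eq_zero.mp ?_).resolve_right hζj
    rw [geom_sum_mul, pow_right_comm, hζ.pow_eq_one, one_pow, sub_self]
  rw [sum_congr rfl fun k _ ↦ geom k, ← sum_div, sum_comm]
  simp only [← sum_mul]
  rw [sum_eq_single_of_mem 0 (mem_range.mpr hn.bot_lt) fun j hj hj0 ↦ by
    rw [sum_pow hj hj0, zero_mul]]
  simp

theorem sum_poissonKernel_pow_mul {n : ℕ} {ζ x : ℂ} (hζ : IsPrimitiveRoot ζ n)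
    (hx : x ^ n ≠ 1) :
    ∑ k ∈ range n, poissonKernel 0 (ζ ^ k * x) 1 = n * poissonKernel 0 (x ^ n) 1 := by
  have herglotz {y : ℂ} (hy : 1 - y ≠ 0) : herglotzRieszKernel 0 y 1 = 2 * (1 / (1 - y)) - 1 := by
    rw [herglotzRieszKernel_def, sub_zero, sub_zero]
    field_simp
    ring
  have hx' : 1 - x ^ n ≠ 0 := sub_ne_zero.mpr hx.symm
  have hζx (k : ℕ) : 1 - ζ ^ k * x ≠ 0 := fun h ↦ hx <| by
    rw [← one_pow n, sub_eq_zero.mp h, mul_pow, pow_right_comm, hζ.pow_eq_one, one_pow, one_mul]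
  have sum_herglotz : ∑ k ∈ range n, herglotzRieszKernel 0 (ζ ^ k * x) 1 =
      n * herglotzRieszKernel 0 (x ^ n) 1 := by
    rw [sum_congr rfl fun k _ ↦ herglotz (hζx k), herglotz hx', sum_sub_distrib, ← mul_sum,
      sum_one_div_one_sub_pow_mul hζ hx, sum_const, card_range, nsmul_one]
    ring
  simp only [poissonKernel_eq_re_herglotzRieszKernel, Function.comp_apply]
  rw [← Complex.re_sum, sum_herglotz, ← nsmul_eq_mul, Complex.re_nsmul, nsmul_eq_mul]

theorem poissonKernel_zero_ofReal_mul_exp_one (r θ : ℝ) :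
    poissonKernel 0 (r * Complex.exp (θ * Complex.I)) 1 =
      (1 - r ^ 2) / (1 - 2 * r * cos θ + r ^ 2) := by
  have h : ‖(1 : ℂ) - r * Complex.exp (θ * Complex.I)‖ ^ 2 = 1 - 2 * r * cos θ + r ^ 2 := by
    rw [← Complex.normSq_eq_norm_sq, Complex.normSq_apply]
    simp only [Complex.sub_re, Complex.sub_im, Complex.one_re, Complex.one_im,
      Complex.re_ofReal_mul, Complex.im_ofReal_mul, Complex.exp_ofReal_mul_I_re,
      Complex.exp_ofReal_mul_I_im]
    linear_combination r ^ 2 * sin_sq_add_cos_sq θ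
  simp [poissonKernel_def, h]

theorem sum_poissonKernel_real {n : ℕ} {r : ℝ} (hn : n ≠ 0) (hr : |r| < 1) (θ : ℝ) :
    ∑ k ∈ range n, (1 - r ^ 2) / (1 - 2 * r * cos (θ + 2 * π * k / n) + r ^ 2) =
      n * ((1 - (r ^ n) ^ 2) / (1 - 2 * r ^ n * cos (n * θ) + (r ^ n) ^ 2)) := by
  have hx : (r * Complex.exp (θ * Complex.I)) ^ n ≠ 1 := fun h ↦ by
    have := congrArg norm h
    rw [norm_pow, norm_mul, Complex.norm_exp_ofReal_mul_I, Complex.norm_real, norm_eq_abs, mul_one,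
      norm_one] at this
    exact (pow_lt_one₀ (abs_nonneg r) hr hn).ne this
  have sum_eq := sum_poissonKernel_pow_mul (Complex.isPrimitiveRoot_exp n hn) hx
  have rotate (k : ℕ) :
      Complex.exp (2 * π * Complex.I / n) ^ k * (r * Complex.exp (θ * Complex.I)) =
        r * Complex.exp (((θ + 2 * π * k / n : ℝ) : ℂ) * Complex.I) := by
    rw [← Complex.exp_nat_mul, mul_left_comm, ← Complex.exp_add]
    push_cast
    ring_nf
  have pow_eq : (r * Complex.exp (θ * Complex.I)) ^ n =
      ((r ^ n : ℝ) : ℂ) * Complex.exp (((n * θ : ℝ) : ℂ) * Complex.I) := by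
    rw [mul_pow, ← Complex.exp_nat_mul]
    push_cast
    ring_nf
  simpa only [rotate, pow_eq, poissonKernel_zero_ofReal_mul_exp_one] using sum_eq

theorem sum_one_div_sub_mul_cos {n : ℕ} {a b w : ℝ} (hn : n ≠ 0) (ha : 0 < a) (hb : 0 < b)
    (hw : w ^ 2 = a ^ 2 - b ^ 2) (θ : ℝ) :
    ∑ k ∈ range n, 1 / (a - w * cos (θ + 2 * π * k / n)) =
      n / b * ((1 - ((w / (a + b)) ^ n) ^ 2) /
        (1 - 2 * (w / (a + b)) ^ n * cos (n * θ) + ((w / (a + b)) ^ n) ^ 2)) := by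
  have hr : |w / (a + b)| < 1 := by
    rw [abs_div, abs_of_pos (add_pos ha hb), div_lt_one (add_pos ha hb)]
    exact abs_lt_of_sq_lt_sq (by nlinarith) (by positivity)
  have kernel_eq (φ : ℝ) : (1 - (w / (a + b)) ^ 2) /
      (1 - 2 * (w / (a + b)) * cos φ + (w / (a + b)) ^ 2) = b * (1 / (a - w * cos φ)) := by
    have hab : a + b ≠ 0 := by positivity
    have num_eq : 1 - (w / (a + b)) ^ 2 = 2 / (a + b) * b := by
      field_simp
      linear_combination -hw
    have den_eq : 1 - 2 * (w / (a + b)) * cos φ + (w / (a + b)) ^ 2 =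
        2 / (a + b) * (a - w * cos φ) := by
      field_simp
      linear_combination hw
    rw [num_eq, den_eq, mul_div_mul_left _ _ (by positivity), mul_one_div]
  have sum_eq := sum_poissonKernel_real hn hr θ
  simp only [kernel_eq, ← mul_sum] at sum_eq
  rw [div_mul_eq_mul_div, eq_div_iff hb.ne', mul_comm, sum_eq]

end PoissonKernel

section Pole

/-- `IsPole f p q h` says that `h` is the pole, with respect to the unit circle centered at `f`, of
the line through `p` and `q`. -/
def IsPole (f p q h : ℝ × ℝ) : Prop :=
  (p.1 - f.1) * (h.1 - f.1) + (p.2 - f.2) * (h.2 - f.2) = 1 ∧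
    (q.1 - f.1) * (h.1 - f.1) + (q.2 - f.2) * (h.2 - f.2) = 1

/-- The point with eccentric angle `θ` on the ellipse with semiaxes `a` and `b`. -/
noncomputable def ellipsePoint (a b θ : ℝ) : ℝ × ℝ := (a * cos θ, b * sin θ)

/-- The pole, with respect to the unit circle centered at `(w * cos β, 0)`, of the chord joining the
points with eccentric angles `θ - β` and `θ + β` on the ellipse with semiaxes `a` and `b`. -/
noncomputable def chordPole (a b w β θ : ℝ) : ℝ × ℝ :=
  (w * cos β + cos θ / (cos β * (a - w * cos θ)), a * sin θ / (b * cos β * (a - w * cos θ)))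

variable {a b w β : ℝ}

theorem IsPole.eq_chordPole {θ : ℝ} {h : ℝ × ℝ} (hb : b ≠ 0) (hsin : sin β ≠ 0) (hcos : cos β ≠ 0)
    (hd : a - w * cos θ ≠ 0)
    (hh : IsPole (w * cos β, 0) (ellipsePoint a b (θ - β)) (ellipsePoint a b (θ + β)) h) :
    h = chordPole a b w β θ := by
  obtain ⟨h₁, h₂⟩ := hh
  obtain ⟨x, y⟩ := h
  simp only [ellipsePoint, cos_sub, sin_sub, cos_add, sin_add, sub_zero] at h₁ h₂
  have along_chord : b * cos θ * y = a * sin θ * (x - w * cos β) :=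
    mul_left_cancel₀ hsin (by linear_combination (h₂ - h₁) / 2)
  have midpoint : (a * cos θ - w) * cos β * (x - w * cos β) + b * cos β * sin θ * y = 1 := by
    linear_combination (h₁ + h₂) / 2
  have hθ := cos_sq_add_sin_sq θ
  ext
  · rw [chordPole, ← sub_eq_iff_eq_add', eq_div_iff (mul_ne_zero hcos hd)]
    linear_combination cos θ * midpoint - a * cos β * (x - w * cos β) * hθ
      - cos β * sin θ * along_chord
  · rw [chordPole, eq_div_iff (mul_ne_zero (mul_ne_zero hb hcos) hd)]
    linear_combination a * sin θ * midpoint - a * b * cos β * y * hθ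
      + (a * cos θ - w) * cos β * along_chord

theorem one_div_mul_sub_mul_cos {φ : ℝ} (hE : a ^ 2 - w ^ 2 * cos β ^ 2 ≠ 0) (hsin : sin β ≠ 0)
    (hd : a - w * cos (φ - β) ≠ 0) (hd' : a - w * cos (φ + β) ≠ 0) :
    1 / ((a - w * cos (φ - β)) * (a - w * cos (φ + β))) =
      (a / 2 * (1 / (a - w * cos (φ - β)) + 1 / (a - w * cos (φ + β))) +
        w * cos β / (2 * sin β) *
          (sin (φ + β) / (a - w * cos (φ + β)) - sin (φ - β) / (a - w * cos (φ - β)))) /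
      (a ^ 2 - w ^ 2 * cos β ^ 2) := by
  have sum_d : (a - w * cos (φ - β)) + (a - w * cos (φ + β)) = 2 * (a - w * cos φ * cos β) := by
    rw [cos_sub, cos_add]
    ring
  have cross_d : sin (φ + β) * (a - w * cos (φ - β)) - sin (φ - β) * (a - w * cos (φ + β)) =
      2 * sin β * (a * cos φ - w * cos β) := by
    rw [sin_add, sin_sub, cos_sub, cos_add]
    linear_combination -2 * w * sin β * cos β * cos_sq_add_sin_sq φ
  rw [eq_div_iff hE]
  field_simp
  linear_combination -a * sin β * sum_d - w * cos β * cross_d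

theorem chordPole_cross_chordPole {φ : ℝ} (hb : b ≠ 0) (hE : a ^ 2 - w ^ 2 * cos β ^ 2 ≠ 0)
    (hsin : sin β ≠ 0) (hcos : cos β ≠ 0)
    (hd : a - w * cos (φ - β) ≠ 0) (hd' : a - w * cos (φ + β) ≠ 0) :
    (chordPole a b w β (φ - β)).1 * (chordPole a b w β (φ + β)).2 -
        (chordPole a b w β (φ + β)).1 * (chordPole a b w β (φ - β)).2 =
      a ^ 2 * tan β / (b * (a ^ 2 - w ^ 2 * cos β ^ 2)) *
          (1 / (a - w * cos (φ - β)) + 1 / (a - w * cos (φ + β))) +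
        w * cos β * (1 + 1 / (a ^ 2 - w ^ 2 * cos β ^ 2)) *
          ((chordPole a b w β (φ + β)).2 - (chordPole a b w β (φ - β)).2) := by
  have sin_two : sin (φ + β) * cos (φ - β) - cos (φ + β) * sin (φ - β) = 2 * sin β * cos β := by
    rw [← sin_sub, ← sin_two_mul]
    ring_nf
  have cross_eq : (chordPole a b w β (φ - β)).1 * (chordPole a b w β (φ + β)).2 -
        (chordPole a b w β (φ + β)).1 * (chordPole a b w β (φ - β)).2 =
      w * cos β * ((chordPole a b w β (φ + β)).2 - (chordPole a b w β (φ - β)).2) +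
        2 * a * tan β / b * (1 / ((a - w * cos (φ - β)) * (a - w * cos (φ + β)))) := by
    simp only [chordPole]
    rw [tan_eq_sin_div_cos]
    field_simp
    linear_combination a * sin_two
  rw [cross_eq, one_div_mul_sub_mul_cos hE hsin hd hd']
  simp only [chordPole]
  rw [tan_eq_sin_div_cos]
  field_simp
  ring

end Pole

section Polygon

/-- The cyclic sum `∑ k, (xₖ yₖ₊₁ - xₖ₊₁ yₖ)` over the vertices `p 0, …, p (n - 1)`, with indices
taken modulo `n`. -/
def shoelaceSum (n : ℕ) (p : ℤ → ℝ × ℝ) : ℝ :=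
  ∑ k ∈ range n, ((p (k : ℤ)).1 * (p (((k + 1) % n : ℕ) : ℤ)).2 -
    (p (((k + 1) % n : ℕ) : ℤ)).1 * (p (k : ℤ)).2)

/-- The area of the polygon with vertices `p 0, …, p (n - 1)`, given by the shoelace formula. -/
noncomputable def polygonArea (n : ℕ) (p : ℤ → ℝ × ℝ) : ℝ :=
  |shoelaceSum n p| / 2

/-- The vertices of the Poncelet homothetic family of `n`-gons inscribed in the ellipse with
semiaxes `a` and `b`; the parameter `t` moves along the family. -/
noncomputable def homotheticVertex (n : ℕ) (a b t : ℝ) (k : ℤ) : ℝ × ℝ :=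
  ellipsePoint a b (2 * π * k / n + t)

theorem shoelaceSum_eq_of_periodic {n : ℕ} {p : ℤ → ℝ × ℝ} (hp : Function.Periodic p n) :
    shoelaceSum n p =
      ∑ k ∈ range n, ((p k).1 * (p (k + 1)).2 - (p (k + 1)).1 * (p k).2) := by
  have hp_nat : Function.Periodic (fun k : ℕ ↦ p k) n := fun k ↦ by exact_mod_cast hp k
  have hmod (k : ℕ) : p (((k + 1) % n : ℕ) : ℤ) = p (k + 1) := by
    exact_mod_cast hp_nat.map_mod_nat (k + 1)
  simp only [shoelaceSum, hmod]

theorem sum_range_add_one_of_periodic {M : Type*} [AddCommGroup M] {n : ℕ} {f : ℤ → M}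
    (hf : Function.Periodic f n) : ∑ k ∈ range n, f (k + 1) = ∑ k ∈ range n, f k := by
  have h := sum_range_sub (fun k : ℕ ↦ f k) n
  rw [sum_sub_distrib, ← zero_add (n : ℤ), hf] at h
  exact_mod_cast sub_eq_zero.mp (h.trans (sub_self _))

variable {n : ℕ} {a b t w : ℝ} {p : ℤ → ℝ × ℝ}

theorem cos_pi_div_pos (hn : 3 ≤ n) : 0 < cos (π / n) := by
  have hn' : (2 : ℝ) < n := by exact_mod_cast hn
  refine cos_pos_of_mem_Ioo ⟨?_, div_lt_div_of_pos_left pi_pos two_pos hn'⟩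
  linarith [pi_pos, div_nonneg pi_pos.le n.cast_nonneg]

theorem sin_pi_div_pos (hn : 2 ≤ n) : 0 < sin (π / n) := by
  have hn' : (1 : ℝ) < n := by exact_mod_cast hn
  exact sin_pos_of_pos_of_lt_pi (by positivity) (div_lt_self pi_pos hn')

theorem sub_mul_cos_pos (hw : |w| < a) (θ : ℝ) : 0 < a - w * cos θ := by
  refine sub_pos.mpr (lt_of_le_of_lt ?_ hw)
  calc w * cos θ ≤ |w| * |cos θ| := (le_abs_self _).trans_eq (abs_mul _ _)
    _ ≤ |w| := mul_le_of_le_one_right (abs_nonneg w) (abs_cos_le_one θ)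

theorem sq_sub_sq_mul_cos_sq_pos (hw : |w| < a) (β : ℝ) : 0 < a ^ 2 - w ^ 2 * cos β ^ 2 := by
  have h := sub_mul_cos_pos hw β
  have h' := sub_mul_cos_pos (w := -w) (by rwa [abs_neg]) β
  nlinarith

theorem shoelaceSum_chordPole {θ : ℝ} (hn : 3 ≤ n) (hb : b ≠ 0) (hw : |w| < a)
    (hp : ∀ k, p k = chordPole a b w (π / n) (θ + 2 * π * k / n)) :
    shoelaceSum n p =
      2 * a ^ 2 * tan (π / n) / (b * (a ^ 2 - w ^ 2 * cos (π / n) ^ 2)) *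
        ∑ k ∈ range n, 1 / (a - w * cos (θ + 2 * π * k / n)) := by
  set g : ℤ → ℝ := fun k ↦ 1 / (a - w * cos (θ + 2 * π * k / n)) with hg
  have angle_add (k : ℤ) : θ + 2 * π * (k + n : ℤ) / n = θ + 2 * π * k / n + 2 * π := by
    have : (n : ℝ) ≠ 0 := by positivity
    push_cast
    field_simp
    ring
  have hp_per : Function.Periodic p n := fun k ↦ by
    rw [hp, hp, angle_add, chordPole, chordPole, cos_add_two_pi, sin_add_two_pi]
  have hg_per : Function.Periodic g n := fun k ↦ by
    simp only [hg, angle_add, cos_add_two_pi]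
  have cross (k : ℤ) : (p k).1 * (p (k + 1)).2 - (p (k + 1)).1 * (p k).2 =
      a ^ 2 * tan (π / n) / (b * (a ^ 2 - w ^ 2 * cos (π / n) ^ 2)) * (g k + g (k + 1)) +
        w * cos (π / n) * (1 + 1 / (a ^ 2 - w ^ 2 * cos (π / n) ^ 2)) *
          ((p (k + 1)).2 - (p k).2) := by
    have angle_k : θ + 2 * π * k / n = θ + (2 * k + 1) * (π / n) - π / n := by ring
    have angle_succ : θ + 2 * π * (k + 1 : ℤ) / n = θ + (2 * k + 1) * (π / n) + π / n := by
      push_cast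
      ring
    simp only [hp, hg, angle_k, angle_succ]
    exact chordPole_cross_chordPole hb (sq_sub_sq_mul_cos_sq_pos hw _).ne'
      (sin_pi_div_pos (by lia)).ne' (cos_pi_div_pos hn).ne'
      (sub_mul_cos_pos hw _).ne' (sub_mul_cos_pos hw _).ne'
  have sum_snd : ∑ k ∈ range n, (p (k + 1)).2 = ∑ k ∈ range n, (p k).2 :=
    sum_range_add_one_of_periodic (hp_per.comp Prod.snd)
  rw [shoelaceSum_eq_of_periodic hp_per, sum_congr rfl fun (k : ℕ) _ ↦ cross k, sum_add_distrib,
    ← mul_sum, ← mul_sum, sum_add_distrib, sum_sub_distrib, sum_snd,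
    sum_range_add_one_of_periodic hg_per]
  simp only [hg, Int.cast_natCast]
  ring

theorem one_div_polygonArea_pole (hn : 3 ≤ n) (ha : 0 < a) (hb : 0 < b)
    (hw : w ^ 2 = a ^ 2 - b ^ 2)
    (hp : ∀ k, IsPole (w * cos (π / n), 0) (homotheticVertex n a b t k)
      (homotheticVertex n a b t (k + 1)) (p k)) :
    1 / polygonArea n p =
      b ^ 2 * (a ^ 2 - w ^ 2 * cos (π / n) ^ 2) / (n * a ^ 2 * tan (π / n)) *
        ((1 + 2 * (w / (a + b)) ^ n * cos (n * t) + ((w / (a + b)) ^ n) ^ 2) /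
          (1 - ((w / (a + b)) ^ n) ^ 2)) := by
  have hwa : |w| < a := abs_lt_of_sq_lt_sq (by nlinarith) ha.le
  have hn0 : n ≠ 0 := by lia
  have hcos := cos_pi_div_pos hn
  have hsin : 0 < sin (π / n) := sin_pi_div_pos (by lia)
  have p_eq (k : ℤ) : p k = chordPole a b w (π / n) (π / n + t + 2 * π * k / n) := by
    refine IsPole.eq_chordPole hb.ne' hsin.ne' hcos.ne' (sub_mul_cos_pos hwa _).ne' ?_
    have angle_left : π / n + t + 2 * π * k / n - π / n = 2 * π * k / n + t := by ring
    have angle_right : π / n + t + 2 * π * k / n + π / n = 2 * π * (k + 1 : ℤ) / n + t := by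
      push_cast
      ring
    rw [angle_left, angle_right]
    exact hp k
  have cos_eq : cos (n * (π / n + t)) = -cos (n * t) := by
    rw [mul_add, mul_div_cancel₀ _ (Nat.cast_ne_zero.mpr hn0), add_comm, cos_add_pi]
  have hsum_pos : 0 < ∑ k ∈ range n, 1 / (a - w * cos (π / n + t + 2 * π * k / n)) :=
    sum_pos (fun k _ ↦ one_div_pos.mpr (sub_mul_cos_pos hwa _)) (nonempty_range_iff.mpr hn0)
  have hE := sq_sub_sq_mul_cos_sq_pos hwa (π / n)
  have htan : 0 < tan (π / n) := by rw [tan_eq_sin_div_cos]; positivity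
  rw [polygonArea, shoelaceSum_chordPole hn hb.ne' hwa p_eq, abs_of_pos (by positivity),
    sum_one_div_sub_mul_cos hn0 ha hb hw, cos_eq, mul_neg, sub_neg_eq_add]
  field_simp

theorem one_div_polygonArea_add_one_div_polygonArea_of_odd {c : ℝ} {p' : ℤ → ℝ × ℝ} (hn : 3 ≤ n)
    (hodd : Odd n) (ha : 0 < a) (hb : 0 < b) (hc : c ^ 2 = a ^ 2 - b ^ 2)
    (hp : ∀ k, IsPole (-c * cos (π / n), 0) (homotheticVertex n a b t k)
      (homotheticVertex n a b t (k + 1)) (p k))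
    (hp' : ∀ k, IsPole (c * cos (π / n), 0) (homotheticVertex n a b t k)
      (homotheticVertex n a b t (k + 1)) (p' k)) :
    1 / polygonArea n p + 1 / polygonArea n p' =
      2 * b ^ 2 * (a ^ 2 - c ^ 2 * cos (π / n) ^ 2) / (n * a ^ 2 * tan (π / n)) *
        (((a + b) ^ n + (a - b) ^ n) / ((a + b) ^ n - (a - b) ^ n)) := by
  have hab : a + b ≠ 0 := by positivity
  have ratio_sq : (c / (a + b)) ^ 2 = (a - b) / (a + b) := by
    rw [div_pow, hc]
    field_simp
    ring
  have ratio_pow : ((c / (a + b)) ^ n) ^ 2 = (a - b) ^ n / (a + b) ^ n := by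
    rw [pow_right_comm, ratio_sq, div_pow]
  have quotient_eq : (1 + ((c / (a + b)) ^ n) ^ 2) / (1 - ((c / (a + b)) ^ n) ^ 2) =
      ((a + b) ^ n + (a - b) ^ n) / ((a + b) ^ n - (a - b) ^ n) := by
    have hpow : (a + b) ^ n ≠ 0 := pow_ne_zero n hab
    rw [ratio_pow, one_add_div hpow, one_sub_div hpow, div_div_div_cancel_right₀ hpow]
  rw [one_div_polygonArea_pole hn ha hb ((neg_sq c).trans hc) hp,
    one_div_polygonArea_pole hn ha hb hc hp', ← quotient_eq, neg_div, hodd.neg_pow]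
  ring

end Polygon

theorem cos_pi_div_five_sq : cos (π / 5) ^ 2 = (3 + √5) / 8 := by
  rw [cos_pi_div_five]
  linear_combination sq_sqrt (show (0 : ℝ) ≤ 5 by norm_num) / 16

theorem tan_eq_sin_two_mul_div {β : ℝ} (hcos : cos β ≠ 0) :
    tan β = sin (2 * β) / (2 * cos β ^ 2) := by
  rw [tan_eq_sin_div_cos, sin_two_mul]
  field_simp

/-- For `N = 5`, the harmonic mean relation for the areas of the two lateral
harmonic pentagons (the polar images of the homothetic family with respect to
the two foci of its inner ellipse):
`1/A₁ + 1/A₂ = (b/(40·sin(2π/5)·a))·((a⁴ + 10a²b² + 5b⁴)·(√5·(a² + 3b²) + 5a² + 7b²))/(5a⁴ + 10a²b² + b⁴)`,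
independent of `t`. -/
theorem lateral_harmonic_areas_five (a b t : ℝ) (hab : b < a) (hb : 0 < b)
    (c : ℝ) (hc : c = Real.sqrt (a ^ 2 - b ^ 2))
    (u : ℤ → ℝ × ℝ)
    (hu : ∀ k : ℤ, u k =
      (a * Real.cos (2 * Real.pi * (k : ℝ) / 5 + t),
       b * Real.sin (2 * Real.pi * (k : ℝ) / 5 + t)))
    (f1 f2 : ℝ × ℝ)
    (hf1 : f1 = (-c * Real.cos (Real.pi / 5), 0))
    (hf2 : f2 = (c * Real.cos (Real.pi / 5), 0))
    (p p' : ℤ → ℝ × ℝ)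
    (hp : ∀ k : ℤ,
      (((u k).1 - f1.1) * ((p k).1 - f1.1) + ((u k).2 - f1.2) * ((p k).2 - f1.2) = 1) ∧
      (((u (k + 1)).1 - f1.1) * ((p k).1 - f1.1) + ((u (k + 1)).2 - f1.2) * ((p k).2 - f1.2) = 1))
    (hp' : ∀ k : ℤ,
      (((u k).1 - f2.1) * ((p' k).1 - f2.1) + ((u k).2 - f2.2) * ((p' k).2 - f2.2) = 1) ∧
      (((u (k + 1)).1 - f2.1) * ((p' k).1 - f2.1) + ((u (k + 1)).2 - f2.2) * ((p' k).2 - f2.2) = 1))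
    (A1 A2 : ℝ)
    (hA1 : A1 = |∑ k ∈ Finset.range 5,
      ((p (k : ℤ)).1 * (p ((((k + 1) % 5 : ℕ)) : ℤ)).2 -
        (p ((((k + 1) % 5 : ℕ)) : ℤ)).1 * (p (k : ℤ)).2)| / 2)
    (hA2 : A2 = |∑ k ∈ Finset.range 5,
      ((p' (k : ℤ)).1 * (p' ((((k + 1) % 5 : ℕ)) : ℤ)).2 -
        (p' ((((k + 1) % 5 : ℕ)) : ℤ)).1 * (p' (k : ℤ)).2)| / 2) :
    1 / A1 + 1 / A2 =
      (b / (40 * Real.sin (2 * Real.pi / 5) * a)) *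
        ((a ^ 4 + 10 * a ^ 2 * b ^ 2 + 5 * b ^ 4) *
          (Real.sqrt 5 * (a ^ 2 + 3 * b ^ 2) + 5 * a ^ 2 + 7 * b ^ 2)) /
        (5 * a ^ 4 + 10 * a ^ 2 * b ^ 2 + b ^ 4) := by
  have ha : 0 < a := hb.trans hab
  have hc2 : c ^ 2 = a ^ 2 - b ^ 2 := by rw [hc, sq_sqrt (by nlinarith)]
  obtain rfl : u = homotheticVertex 5 a b t := funext fun k ↦ by
    simp [hu, homotheticVertex, ellipsePoint]
  subst hf1 hf2
  have hsum : 1 / A1 + 1 / A2 =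
      2 * b ^ 2 * (a ^ 2 - c ^ 2 * cos (π / 5) ^ 2) / (5 * a ^ 2 * tan (π / 5)) *
        (((a + b) ^ 5 + (a - b) ^ 5) / ((a + b) ^ 5 - (a - b) ^ 5)) := by
    subst hA1 hA2
    exact one_div_polygonArea_add_one_div_polygonArea_of_odd (n := 5) (by norm_num) (by decide)
      ha hb hc2 hp hp'
  have hcos : cos (π / 5) ≠ 0 := (cos_pi_div_pos (n := 5) (by norm_num)).ne'
  have hfactor : 32 * cos (π / 5) ^ 2 * (a ^ 2 - c ^ 2 * cos (π / 5) ^ 2) =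
      √5 * (a ^ 2 + 3 * b ^ 2) + 5 * a ^ 2 + 7 * b ^ 2 := by
    rw [hc2, cos_pi_div_five_sq]
    linear_combination -(a ^ 2 - b ^ 2) / 2 * sq_sqrt (show (0 : ℝ) ≤ 5 by norm_num)
  have hadd : (a + b) ^ 5 + (a - b) ^ 5 = 2 * a * (a ^ 4 + 10 * a ^ 2 * b ^ 2 + 5 * b ^ 4) := by
    ring
  have hsub : (a + b) ^ 5 - (a - b) ^ 5 = 2 * b * (5 * a ^ 4 + 10 * a ^ 2 * b ^ 2 + b ^ 4) := by
    ring
  rw [hsum, tan_eq_sin_two_mul_div hcos, ← hfactor, hadd, hsub, ← mul_div_assoc 2 π 5]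
  field_simp
  ring
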